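/- Let n, m ≥ 1, p > 1, and let u = (u_1,…,u_m) be an m-tuple of C² functions u_i : ℝⁿ → ℝ solving the p-Laplacian system −div(|∇u_i|^{p−2}∇u_i) = H_i(u) on ℝⁿ for every i. Write x = (x', x_n) ∈ ℝ^{n−1} × ℝ. Assume: (i) for every x_n the function x' ↦ ∑_{i=1}^m |∇u_i|^{p−2}[ (1/p)|∇_{x'}u_i|² − ((p−1)/p)|∂_{x_n}u_i|² ] − H̃(u) is integrable over ℝ^{n−1}, so that its integral G(x_n) (as a limit over balls B_R(0) ⊂ ℝ^{n−1}) exists and is finite; (ii) differentiation under the integral sign in x_n is justified for each truncated integral over B_R(0); and (iii) for every x_n there is a sequence R_k → ∞ along which ∫_0^{x_n} ∫_{∂B_{R_k}(0)⊂ℝ^{n−1}} ∑_{i=1}^m |∇u_i|^{p−2}(∂_{ν_{x'}}u_i)(∂_{x_n}u_i) dS(x') dt → 0. Then G(x_n) is constant in x_n: ∫_{ℝ^{n−1}} ( ∑_{i=1}^m |∇u_i|^{p−2}[ (1/p)|∇_{x'}u_i|² − ((p−1)/p)|∂_{x_n}u_i|² ] − H̃(u) ) dx' ≡ C. -/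

import Mathlib

open MeasureTheory Metric Finset Filter
open scoped RealInnerProductSpace

noncomputable section

/-- Divergence of a vector field on Euclidean space. -/
def vdiv {N : ℕ} (F : EuclideanSpace ℝ (Fin N) → EuclideanSpace ℝ (Fin N))
    (x : EuclideanSpace ℝ (Fin N)) : ℝ :=
  ∑ i, fderiv ℝ F x (EuclideanSpace.single i 1) i

/-- The point `(x', t) ∈ ℝ^{n} × ℝ = ℝ^{n+1}`. -/
def emb {n : ℕ} (x' : EuclideanSpace ℝ (Fin n)) (t : ℝ) : EuclideanSpace ℝ (Fin (n + 1)) :=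
  (EuclideanSpace.equiv (Fin (n + 1)) ℝ).symm (Fin.snoc (fun j => x' j) t)

/-- The integrand of the Hamiltonian for the p-Laplacian system:
`∑ᵢ |∇uᵢ|^{p-2}[ (1/p)|∇_{x'}uᵢ|² - ((p-1)/p)|∂_{x_n}uᵢ|² ] - H̃(u)` at `(x', t)`. -/
def pIntegrand {n m : ℕ} (p : ℝ) (Ht : (Fin m → ℝ) → ℝ)
    (u : Fin m → EuclideanSpace ℝ (Fin (n + 1)) → ℝ)
    (x' : EuclideanSpace ℝ (Fin n)) (t : ℝ) : ℝ :=
  (∑ i, ‖gradient (u i) (emb x' t)‖ ^ (p - 2)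
      * (1 / p * ‖gradient (fun y => u i (emb y t)) x'‖ ^ 2
        - (p - 1) / p
          * (fderiv ℝ (u i) (emb x' t) (EuclideanSpace.single (Fin.last n) 1)) ^ 2))
    - Ht (fun j => u j (emb x' t))

/-!
Conservation of energy–momentum. The Lagrangian density `L = ∑ᵢ |∇uᵢ|ᵖ / p - H̃(u)` does not depend
on the position, and the system says exactly that the stress `Tₑ = ∑ᵢ |∇uᵢ|^{p-2} (∂ₑuᵢ) ∇uᵢ`
satisfies `div Tₑ = ∂ₑL` for every direction `e`. Take `e = e_n`, and write `Tₙ` for the last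
component and `T'` for the horizontal part of the stress. The integrand is `L - Tₙ`, so its
derivative in `x_n` is the horizontal divergence of `T'`, and by Fubini and the divergence theorem
the increment of its integral over `B_R` is the flux of `T'` through `∂B_R` integrated in `x_n`.
This flux is the boundary term of the assumptions. The stress is `C¹` for every `p > 1`, also where
`∇uᵢ = 0`, since it is quadratic in `∇uᵢ` up to the factor `|∇uᵢ|^{p-2}`.

The divergence theorem on balls comes from integrating the divergence of `((R² - |x|²)₊)² V`, which
vanishes, in polar coordinates and then removing the weight by differentiating in `R`. The spherical
measure of polar coordinates and the Hausdorff measure are both invariant under rotations, hence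
proportional; the constant is irrelevant because the flux tends to zero.
-/

/-! ### Polar coordinates -/

theorem integrableOn_ball_of_continuous {X F : Type*} [MetricSpace X] [ProperSpace X]
    [MeasurableSpace X] [OpensMeasurableSpace X] {μ : Measure X} [IsFiniteMeasureOnCompacts μ]
    [NormedAddCommGroup F] {f : X → F} (hf : Continuous f) {x : X} {r : ℝ} :
    IntegrableOn f (ball x r) μ :=
  (hf.continuousOn.integrableOn_compact (isCompact_closedBall x r)).mono_set ball_subset_closedBall

section PolarCoordinates

variable {E F : Type*} [NormedAddCommGroup E] [NormedSpace ℝ E] [MeasurableSpace E] [BorelSpace E]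
  [FiniteDimensional ℝ E] [NormedAddCommGroup F] [NormedSpace ℝ F]

open Module (finrank)

theorem integral_eq_integral_Ioi_toSphere [Nontrivial E] (μ : Measure E) [μ.IsAddHaarMeasure]
    {f : E → F} (hf : Integrable f μ) :
    ∫ x, f x ∂μ = ∫ r in Set.Ioi (0 : ℝ), r ^ (finrank ℝ E - 1) •
      ∫ ω : sphere (0 : E) 1, f (r • (ω : E)) ∂μ.toSphere := by
  set k := finrank ℝ E - 1
  let g : sphere (0 : E) 1 × Set.Ioi (0 : ℝ) → F := fun z => f ((z.2 : ℝ) • (z.1 : E))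
  have hpolar := μ.measurePreserving_homeomorphUnitSphereProd
  have hemb := (homeomorphUnitSphereProd E).measurableEmbedding
  have hgf (x : ({0}ᶜ : Set E)) : g (homeomorphUnitSphereProd E x) = f x := by
    have hx : ‖(x : E)‖ ≠ 0 := norm_ne_zero_iff.2 x.2
    simp [g, homeomorphUnitSphereProd, smul_smul, hx]
  have hg : Integrable g (μ.toSphere.prod (.volumeIoiPow k)) := by
    rw [← hpolar.integrable_comp_emb hemb]
    refine Integrable.congr ?_ (.of_forall fun x => (hgf x).symm)
    exact (integrableOn_iff_comap_subtypeVal (measurableSet_singleton _).compl).1 hf.integrableOn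
  calc ∫ x, f x ∂μ
      = ∫ x : ({0}ᶜ : Set E), g (homeomorphUnitSphereProd E x) ∂(μ.comap (↑)) := by
        simp only [hgf]
        rw [integral_subtype_comap (measurableSet_singleton _).compl f, restrict_compl_singleton]
    _ = ∫ z, g z ∂(μ.toSphere.prod (.volumeIoiPow k)) := hpolar.integral_comp hemb g
    _ = ∫ r, ∫ ω, g (ω, r) ∂μ.toSphere ∂(Measure.volumeIoiPow k) := integral_prod_symm _ hg
    _ = ∫ r in Set.Ioi (0 : ℝ), r ^ k • ∫ ω : sphere (0 : E) 1, f (r • (ω : E)) ∂μ.toSphere := by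
        simp only [Measure.volumeIoiPow, ENNReal.ofReal]
        rw [integral_withDensity_eq_integral_smul
            (measurable_subtype_coe.pow_const _).real_toNNReal,
          integral_subtype_comap measurableSet_Ioi fun r : ℝ =>
            Real.toNNReal (r ^ k) • ∫ ω : sphere (0 : E) 1, f (r • (ω : E)) ∂μ.toSphere]
        refine setIntegral_congr_fun measurableSet_Ioi fun r hr => ?_
        simp only [NNReal.smul_def, Real.coe_toNNReal _ (pow_nonneg (le_of_lt hr) k)]

theorem setIntegral_ball_eq_intervalIntegral_toSphere [Nontrivial E] (μ : Measure E)
    [μ.IsAddHaarMeasure] {f : E → F} {R : ℝ} (hR : 0 ≤ R) (hf : IntegrableOn f (ball 0 R) μ) :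
    ∫ x in ball 0 R, f x ∂μ = ∫ r in (0 : ℝ)..R, r ^ (finrank ℝ E - 1) •
      ∫ ω : sphere (0 : E) 1, f (r • (ω : E)) ∂μ.toSphere := by
  rw [← integral_indicator measurableSet_ball, integral_eq_integral_Ioi_toSphere μ
      ((integrable_indicator_iff measurableSet_ball).2 hf),
    intervalIntegral.integral_of_le hR, integral_Ioc_eq_integral_Ioo, ← Set.Ioi_inter_Iio,
    ← setIntegral_indicator measurableSet_Iio]
  refine setIntegral_congr_fun measurableSet_Ioi fun r (hr : 0 < r) => ?_
  have hmem (ω : sphere (0 : E) 1) : r • (ω : E) ∈ ball (0 : E) R ↔ r < R := by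
    simp [norm_smul, abs_of_pos hr]
  by_cases h : r < R <;> simp [Set.indicator, hmem, h]

theorem continuous_integral_toSphere (μ : Measure E) [μ.IsAddHaarMeasure] {X : Type*}
    [TopologicalSpace X] [FirstCountableTopology X] [LocallyCompactSpace X] {f : X → E → F}
    (hf : Continuous (Function.uncurry f)) :
    Continuous fun r => ∫ ω : sphere (0 : E) 1, f r ω ∂μ.toSphere := by
  have hf' : Continuous (Function.uncurry fun r (ω : sphere (0 : E) 1) => f r ω) :=
    hf.comp (continuous_fst.prodMk (continuous_subtype_val.comp continuous_snd))
  simpa using continuous_parametric_integral_of_continuous (μ := μ.toSphere) hf' isCompact_univ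

end PolarCoordinates

/-! ### The divergence theorem on balls -/

section Divergence

variable {N : ℕ} {V : EuclideanSpace ℝ (Fin N) → EuclideanSpace ℝ (Fin N)}
  {x : EuclideanSpace ℝ (Fin N)}

theorem vdiv_sum {ι : Type*} (s : Finset ι)
    {W : ι → EuclideanSpace ℝ (Fin N) → EuclideanSpace ℝ (Fin N)}
    (hW : ∀ i ∈ s, DifferentiableAt ℝ (W i) x) :
    vdiv (fun y => ∑ i ∈ s, W i y) x = ∑ i ∈ s, vdiv (W i) x := by
  simp only [vdiv, fderiv_fun_sum hW, _root_.sum_apply, WithLp.ofLp_sum, Finset.sum_apply]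
  exact Finset.sum_comm

theorem vdiv_smul {f : EuclideanSpace ℝ (Fin N) → ℝ} (hf : DifferentiableAt ℝ f x)
    (hV : DifferentiableAt ℝ V x) :
    vdiv (fun y => f y • V y) x = f x * vdiv V x + fderiv ℝ f x (V x) := by
  have hVx : V x = ∑ i, V x i • EuclideanSpace.single i (1 : ℝ) := by
    simpa using ((EuclideanSpace.basisFun (Fin N) ℝ).sum_repr (V x)).symm
  conv_rhs => rw [hVx]
  simp [vdiv, fderiv_fun_smul hf hV, Finset.sum_add_distrib, Finset.mul_sum, mul_comm]

theorem continuous_vdiv (hV : ContDiff ℝ 1 V) : Continuous (vdiv V) :=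
  continuous_finsetSum _ fun i _ =>
    (EuclideanSpace.proj i).continuous.comp
      ((hV.continuous_fderiv one_ne_zero).clm_apply continuous_const)

theorem integral_vdiv_eq_zero_of_hasCompactSupport (hV : ContDiff ℝ 1 V)
    (hsupp : HasCompactSupport V) : ∫ x, vdiv V x = 0 := by
  have hdiff := hV.differentiable one_ne_zero
  have hderiv (i : Fin N) : Integrable fun x => fderiv ℝ V x (EuclideanSpace.single i 1) :=
    ((hV.continuous_fderiv one_ne_zero).clm_apply continuous_const).integrable_of_hasCompactSupport
      (hsupp.fderiv_apply ℝ _)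
  have hzero (i : Fin N) : ∫ x, fderiv ℝ V x (EuclideanSpace.single i 1) = 0 := by
    simpa using integral_smul_fderiv_eq_neg_fderiv_smul_of_integrable (μ := volume)
      (f := fun _ => (1 : ℝ)) (g := V) (v := EuclideanSpace.single i (1 : ℝ))
      (by simp) (by simpa using hderiv i)
      (by simpa using hV.continuous.integrable_of_hasCompactSupport hsupp)
      (by simp) (fun x _ => hdiff x)
  calc ∫ x, vdiv V x
      = ∑ i, ∫ x, EuclideanSpace.proj (𝕜 := ℝ) i (fderiv ℝ V x (EuclideanSpace.single i 1)) :=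
        integral_finsetSum _ fun i _ => (EuclideanSpace.proj (𝕜 := ℝ) i).integrable_comp (hderiv i)
    _ = 0 := Finset.sum_eq_zero fun i _ => by
        rw [(EuclideanSpace.proj (𝕜 := ℝ) i).integral_comp_comm (hderiv i), hzero i, map_zero]

end Divergence

theorem hasDerivAt_max_zero_sq (s : ℝ) :
    HasDerivAt (fun s : ℝ => max 0 s ^ 2) (2 * max 0 s) s := by
  rcases lt_trichotomy s 0 with hs | rfl | hs
  · rw [max_eq_left hs.le, mul_zero]
    refine (hasDerivAt_const s (0 : ℝ)).congr_of_eventuallyEq ?_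
    filter_upwards [gt_mem_nhds hs] with a ha
    simp [max_eq_left ha.le]
  · simp only [max_self, mul_zero]
    rw [hasDerivAt_iff_isLittleO_nhds_zero]
    refine Asymptotics.IsBigO.trans_isLittleO (g := fun h : ℝ => h ^ 2) ?_
      (Asymptotics.isLittleO_pow_id one_lt_two)
    refine Asymptotics.IsBigO.of_bound 1 (.of_forall fun h => ?_)
    simpa using pow_le_pow_left₀ (abs_nonneg _) (abs_max_le_max_abs_abs (a := 0) (b := h)) 2
  · rw [max_eq_right hs.le]
    refine HasDerivAt.congr_of_eventuallyEq (f := fun a => a ^ 2) ?_ ?_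
    · simpa using hasDerivAt_pow 2 s
    · filter_upwards [lt_mem_nhds hs] with a ha
      simp [max_eq_right ha.le]

section Cutoff

variable {E : Type*} [NormedAddCommGroup E]

/-- A `C¹` cutoff function of the ball of radius `R`. Being polynomial and radial inside the ball,
it turns the vanishing of `∫ vdiv (ballCutoff R • V)` into a weighted divergence theorem. -/
def ballCutoff (R : ℝ) (x : E) : ℝ := max 0 (R ^ 2 - ‖x‖ ^ 2) ^ 2

theorem ballCutoff_eq_zero {R : ℝ} {x : E} (hR : 0 ≤ R) (hx : x ∉ ball (0 : E) R) :
    ballCutoff R x = 0 := by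
  have : R ≤ ‖x‖ := by simpa using hx
  have : R ^ 2 ≤ ‖x‖ ^ 2 := by gcongr
  simp [ballCutoff, this]

variable [InnerProductSpace ℝ E]

theorem hasFDerivAt_ballCutoff (R : ℝ) (x : E) :
    HasFDerivAt (ballCutoff R) (-(4 * max 0 (R ^ 2 - ‖x‖ ^ 2)) • innerSL ℝ x) x := by
  have hsq : HasFDerivAt (fun y : E => R ^ 2 - ‖y‖ ^ 2) (-(2 • innerSL ℝ x)) x :=
    (hasStrictFDerivAt_norm_sq x).hasFDerivAt.const_sub _
  refine ((hasDerivAt_max_zero_sq _).comp_hasFDerivAt x hsq).congr_fderiv ?_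
  ext v
  simp only [smul_neg, neg_apply, smul_apply, coe_innerSL_apply, nsmul_eq_mul, Nat.cast_ofNat,
    smul_eq_mul, neg_smul, neg_inj]
  ring

theorem contDiff_ballCutoff (R : ℝ) : ContDiff ℝ 1 (ballCutoff R : E → ℝ) :=
  contDiff_one_iff_hasFDerivAt.2
    ⟨fun x => -(4 * max 0 (R ^ 2 - ‖x‖ ^ 2)) • innerSL ℝ x, by fun_prop, hasFDerivAt_ballCutoff R⟩

end Cutoff

theorem vdiv_ballCutoff_smul {N : ℕ} {V : EuclideanSpace ℝ (Fin N) → EuclideanSpace ℝ (Fin N)}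
    {x : EuclideanSpace ℝ (Fin N)} (hV : DifferentiableAt ℝ V x) (R : ℝ) :
    vdiv (fun y => ballCutoff R y • V y) x
      = ballCutoff R x * vdiv V x - 4 * max 0 (R ^ 2 - ‖x‖ ^ 2) * ⟪x, V x⟫ := by
  rw [vdiv_smul (hasFDerivAt_ballCutoff R x).differentiableAt hV,
    (hasFDerivAt_ballCutoff R x).fderiv]
  simp only [neg_smul, neg_apply, smul_apply, coe_innerSL_apply, smul_eq_mul]
  ring

theorem setIntegral_ball_sq_mul_vdiv {N : ℕ}
    {V : EuclideanSpace ℝ (Fin N) → EuclideanSpace ℝ (Fin N)} (hV : ContDiff ℝ 1 V) {R : ℝ}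
    (hR : 0 ≤ R) :
    ∫ x in ball 0 R, (R ^ 2 - ‖x‖ ^ 2) ^ 2 * vdiv V x
      = ∫ x in ball 0 R, 4 * (R ^ 2 - ‖x‖ ^ 2) * ⟪x, V x⟫ := by
  have hprod x := vdiv_ballCutoff_smul (hV.differentiable one_ne_zero x) R
  have hVc := hV.continuous
  have hdiv := continuous_vdiv hV
  have hsupp : HasCompactSupport fun x => ballCutoff R x • V x :=
    HasCompactSupport.intro (isCompact_closedBall 0 R) fun x hx => by
      rw [ballCutoff_eq_zero hR fun h => hx (ball_subset_closedBall h), zero_smul]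
  have hzero : ∫ x in ball 0 R, vdiv (fun y => ballCutoff R y • V y) x = 0 := by
    rw [setIntegral_eq_integral_of_forall_compl_eq_zero fun x hx => ?_]
    · exact integral_vdiv_eq_zero_of_hasCompactSupport ((contDiff_ballCutoff R).smul hV) hsupp
    have : R ≤ ‖x‖ := by simpa using hx
    have : R ^ 2 - ‖x‖ ^ 2 ≤ 0 := by nlinarith
    rw [hprod, ballCutoff_eq_zero hR hx, max_eq_left this]
    simp
  rw [← sub_eq_zero, ← integral_sub (integrableOn_ball_of_continuous (by fun_prop))
      (integrableOn_ball_of_continuous (by fun_prop)), ← hzero]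
  refine setIntegral_congr_fun measurableSet_ball fun x hx => ?_
  have : ‖x‖ < R := by simpa using hx
  have : 0 ≤ R ^ 2 - ‖x‖ ^ 2 := by nlinarith [norm_nonneg x]
  simp only [hprod]
  rw [ballCutoff, max_eq_right this]

theorem eq_zero_of_forall_integral_sq_sub_sq_mul_eq_zero {f : ℝ → ℝ} (hf : Continuous f)
    (h : ∀ R > 0, ∫ r in (0 : ℝ)..R, (R ^ 2 - r ^ 2) * f r = 0) {R : ℝ} (hR : 0 < R) :
    f R = 0 := by
  have hderiv {g : ℝ → ℝ} (hg : Continuous g) (R : ℝ) :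
      HasDerivAt (fun S => ∫ r in (0 : ℝ)..S, g r) (g R) R :=
    intervalIntegral.integral_hasDerivAt_right (hg.intervalIntegrable _ _)
      (hg.stronglyMeasurableAtFilter _ _) hg.continuousAt
  have hzero {g : ℝ → ℝ} {g' R : ℝ} (hg : ∀ S > 0, g S = 0) (hR : 0 < R)
      (hg' : HasDerivAt g g' R) : g' = 0 :=
    hg'.unique ((hasDerivAt_const R 0).congr_of_eventuallyEq
      (eventually_of_mem (lt_mem_nhds hR) hg))
  have hsq : Continuous fun r => r ^ 2 * f r := by fun_prop
  have hexpand (R : ℝ) : ∫ r in (0 : ℝ)..R, (R ^ 2 - r ^ 2) * f r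
      = R ^ 2 * (∫ r in (0 : ℝ)..R, f r) - ∫ r in (0 : ℝ)..R, r ^ 2 * f r := by
    simp only [sub_mul]
    rw [intervalIntegral.integral_sub ((hf.const_mul _).intervalIntegrable _ _)
      (hsq.intervalIntegrable _ _), intervalIntegral.integral_const_mul]
  have hint : ∀ S > 0, ∫ r in (0 : ℝ)..S, f r = 0 := by
    intro S hS
    have := hzero (fun T hT => (hexpand T).symm.trans (h T hT)) hS
      (((hasDerivAt_pow 2 S).mul (hderiv hf S)).sub (hderiv hsq S))
    simpa [hS.ne'] using this
  exact hzero hint hR (hderiv hf R)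

theorem integral_eq_of_forall_integral_sq_sub_sq_mul_eq {a b : ℝ → ℝ} (ha : Continuous a)
    (hb : Continuous b)
    (h : ∀ R > 0, ∫ r in (0 : ℝ)..R, (R ^ 2 - r ^ 2) ^ 2 * a r
      = ∫ r in (0 : ℝ)..R, 4 * (R ^ 2 - r ^ 2) * (r * b r)) {R : ℝ} (hR : 0 < R) :
    ∫ r in (0 : ℝ)..R, a r = b R := by
  let A : ℝ → ℝ := fun r => ∫ s in (0 : ℝ)..r, a s
  have hA (r : ℝ) : HasDerivAt A (a r) r :=
    intervalIntegral.integral_hasDerivAt_right (ha.intervalIntegrable _ _)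
      (ha.stronglyMeasurableAtFilter _ _) ha.continuousAt
  have hAc : Continuous A := continuous_iff_continuousAt.2 fun r => (hA r).continuousAt
  have hparts (R : ℝ) : ∫ r in (0 : ℝ)..R, (R ^ 2 - r ^ 2) ^ 2 * a r
      = ∫ r in (0 : ℝ)..R, 4 * (R ^ 2 - r ^ 2) * (r * A r) := by
    have hw (r : ℝ) : HasDerivAt (fun r => (R ^ 2 - r ^ 2) ^ 2) (-4 * (R ^ 2 - r ^ 2) * r) r := by
      refine (((hasDerivAt_pow 2 r).const_sub (R ^ 2)).pow 2).congr_deriv ?_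
      ring
    rw [intervalIntegral.integral_mul_deriv_eq_deriv_mul (fun r _ => hw r) (fun r _ => hA r)
      (Continuous.intervalIntegrable (by fun_prop) _ _) (ha.intervalIntegrable _ _)]
    have hA0 : A 0 = 0 := intervalIntegral.integral_same
    simp only [sub_self, hA0, ne_eq, OfNat.ofNat_ne_zero, not_false_eq_true, zero_pow, zero_mul,
      mul_zero, zero_sub, ← intervalIntegral.integral_neg]
    exact intervalIntegral.integral_congr fun r _ => by ring
  have hzero : R * (A R - b R) = 0 := by
    refine eq_zero_of_forall_integral_sq_sub_sq_mul_eq_zero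
      (f := fun r => r * (A r - b r)) (by fun_prop) (fun S hS => ?_) hR
    have hdiff := sub_eq_zero.2 ((hparts S).symm.trans (h S hS))
    rw [← intervalIntegral.integral_sub (Continuous.intervalIntegrable (by fun_prop) _ _)
      (Continuous.intervalIntegrable (by fun_prop) _ _)] at hdiff
    refine (mul_eq_zero_iff_left (four_ne_zero' ℝ)).1 (Eq.trans ?_ hdiff)
    rw [← intervalIntegral.integral_const_mul]
    exact intervalIntegral.integral_congr fun r _ => by ring
  exact sub_eq_zero.1 ((mul_eq_zero_iff_left hR.ne').1 hzero)

theorem setIntegral_ball_vdiv_eq_integral_toSphere {N : ℕ} [NeZero N]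
    {V : EuclideanSpace ℝ (Fin N) → EuclideanSpace ℝ (Fin N)} (hV : ContDiff ℝ 1 V) {R : ℝ}
    (hR : 0 < R) :
    ∫ x in ball 0 R, vdiv V x = R ^ (N - 1) *
      ∫ ω : sphere (0 : EuclideanSpace ℝ (Fin N)) 1, ⟪(ω : EuclideanSpace ℝ (Fin N)), V (R • ω)⟫
        ∂(volume : Measure (EuclideanSpace ℝ (Fin N))).toSphere := by
  have hVc := hV.continuous
  have hdiv := continuous_vdiv hV
  let divTotal : ℝ → ℝ := fun r => ∫ ω : sphere (0 : EuclideanSpace ℝ (Fin N)) 1,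
    vdiv V (r • ω) ∂(volume : Measure (EuclideanSpace ℝ (Fin N))).toSphere
  let flux : ℝ → ℝ := fun r => ∫ ω : sphere (0 : EuclideanSpace ℝ (Fin N)) 1,
    ⟪(ω : EuclideanSpace ℝ (Fin N)), V (r • ω)⟫
      ∂(volume : Measure (EuclideanSpace ℝ (Fin N))).toSphere
  have hdivTotal : Continuous divTotal :=
    continuous_integral_toSphere _ (f := fun r x => vdiv V (r • x)) (by fun_prop)
  have hflux : Continuous flux :=
    continuous_integral_toSphere _ (f := fun r x => ⟪x, V (r • x)⟫) (by fun_prop)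
  have hpolar {f : EuclideanSpace ℝ (Fin N) → ℝ} (hf : Continuous f) {S : ℝ} (hS : 0 < S) :=
    setIntegral_ball_eq_intervalIntegral_toSphere volume hS.le
      (integrableOn_ball_of_continuous hf)
  simp only [finrank_euclideanSpace_fin, smul_eq_mul] at hpolar
  rw [hpolar hdiv hR]
  refine integral_eq_of_forall_integral_sq_sub_sq_mul_eq
    (a := fun r => r ^ (N - 1) * divTotal r) (b := fun r => r ^ (N - 1) * flux r)
    (by fun_prop) (by fun_prop) (fun S hS => ?_) hR
  have h := setIntegral_ball_sq_mul_vdiv hV hS.le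
  rw [hpolar (by fun_prop) hS, hpolar (by fun_prop) hS] at h
  simp only [norm_smul, norm_eq_of_mem_sphere, mul_one, Real.norm_eq_abs, sq_abs,
    real_inner_smul_left, integral_const_mul] at h
  convert h using 3
  all_goals ring

/-! ### Surface measure of the sphere -/

section UniformlyDistributed

variable {X : Type*} [PseudoMetricSpace X] [MeasurableSpace X]

/-- A measure is uniformly distributed on `s` if it is carried by `s` and gives equal mass to
balls of equal radius centred in `s`. Finite measures with this property are proportional, which
identifies different constructions of the surface measure of a sphere. -/
structure IsUniformlyDistributedOn (μ : Measure X) (s : Set X) : Prop where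
  measure_compl : μ sᶜ = 0
  measure_closedBall_eq : ∀ x ∈ s, ∀ y ∈ s, ∀ r, μ (closedBall x r) = μ (closedBall y r)

theorem IsUniformlyDistributedOn.add {ρ ν : Measure X} {s : Set X}
    (hρ : IsUniformlyDistributedOn ρ s) (hν : IsUniformlyDistributedOn ν s) :
    IsUniformlyDistributedOn (ρ + ν) s where
  measure_compl := by simp [hρ.measure_compl, hν.measure_compl]
  measure_closedBall_eq x hx y hy r := by
    simp [hρ.measure_closedBall_eq x hx y hy r, hν.measure_closedBall_eq x hx y hy r]

end UniformlyDistributed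

namespace IsUniformlyDistributedOn

variable {X : Type*} [MetricSpace X] [SecondCountableTopology X] [HasBesicovitchCovering X]
  [MeasurableSpace X] [BorelSpace X] {ρ ν : Measure X} [IsFiniteMeasure ρ] [IsFiniteMeasure ν]
  {s : Set X}

theorem exists_eq_smul_of_absolutelyContinuous (hρ : IsUniformlyDistributedOn ρ s)
    (hν : IsUniformlyDistributedOn ν s) (hac : ρ ≪ ν) : ∃ c : ENNReal, ρ = c • ν := by
  obtain rfl | hν0 := eq_or_ne ν 0
  · exact ⟨0, by simpa using hac⟩
  have : (ae ν).NeBot := ae_neBot.2 hν0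
  -- By differentiation of measures, the density is the limit of `ρ B / ν B` over shrinking balls.
  have hlim := Besicovitch.ae_tendsto_rnDeriv ρ ν
  have hmem : ∀ᵐ x ∂ν, x ∈ s := hν.measure_compl
  obtain ⟨x₀, hx₀, hx₀s⟩ := (hlim.and hmem).exists
  have hconst : ρ.rnDeriv ν =ᵐ[ν] fun _ => ρ.rnDeriv ν x₀ := by
    filter_upwards [hlim, hmem] with x hx hxs
    refine tendsto_nhds_unique hx ?_
    simpa only [hρ.measure_closedBall_eq x hxs x₀ hx₀s, hν.measure_closedBall_eq x hxs x₀ hx₀s]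
      using hx₀
  refine ⟨ρ.rnDeriv ν x₀, ?_⟩
  rw [← withDensity_const, ← withDensity_congr_ae hconst, Measure.withDensity_rnDeriv_eq ρ ν hac]

theorem measure_univ_smul_eq (hρ : IsUniformlyDistributedOn ρ s)
    (hν : IsUniformlyDistributedOn ν s) : ν Set.univ • ρ = ρ Set.univ • ν := by
  obtain ⟨a, ha⟩ := hρ.exists_eq_smul_of_absolutelyContinuous (hρ.add hν)
    (Measure.AbsolutelyContinuous.rfl.add_right ν)
  obtain ⟨b, hb⟩ := hν.exists_eq_smul_of_absolutelyContinuous (hρ.add hν)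
    (add_comm ν ρ ▸ Measure.AbsolutelyContinuous.rfl.add_right ρ)
  generalize ρ + ν = τ at ha hb
  simp only [ha, hb, Measure.smul_apply, smul_smul, smul_eq_mul]
  congr 1
  ring

end IsUniformlyDistributedOn

section LinearIsometry

variable {E : Type*} [NormedAddCommGroup E] [NormedSpace ℝ E] [MeasurableSpace E] [BorelSpace E]

theorem measurePreserving_hausdorffMeasure_restrict_sphere (d R : ℝ) (e : E ≃ₗᵢ[ℝ] E) :
    MeasurePreserving e (μH[d].restrict (sphere (0 : E) R)) (μH[d].restrict (sphere 0 R)) := by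
  have h := (e.toIsometryEquiv.measurePreserving_hausdorffMeasure d).restrict_preimage
    (isClosed_sphere (x := (0 : E)) (ε := R)).measurableSet
  have hpre : e.toIsometryEquiv ⁻¹' sphere (0 : E) R = sphere 0 R := by ext; simp
  rwa [hpre] at h

open scoped Pointwise in
theorem measurePreserving_map_toSphere {μ : Measure E} (e : E ≃ₗᵢ[ℝ] E)
    (he : MeasurePreserving e μ μ) :
    MeasurePreserving e (μ.toSphere.map Subtype.val) (μ.toSphere.map Subtype.val) := by
  have hval : Measurable (Subtype.val : sphere (0 : E) 1 → E) := measurable_subtype_coe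
  refine ⟨he.measurable, Measure.ext fun s hs => ?_⟩
  have hsector : e '' (Set.Ioo (0 : ℝ) 1 • (sphere 0 1 ∩ e ⁻¹' s))
      = Set.Ioo (0 : ℝ) 1 • (sphere 0 1 ∩ s) := by
    have himage : e '' (sphere 0 1 ∩ e ⁻¹' s) = sphere 0 1 ∩ s := by
      rw [Set.image_inter_preimage]
      simp
    rw [← himage]
    exact Set.image_image2_distrib_right fun a x => map_smul e a x
  have hinvariant (A : Set E) : μ (e '' A) = μ A := by
    rw [← he.measure_preimage_emb e.toHomeomorph.measurableEmbedding,
      Set.preimage_image_eq A e.injective]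
  rw [Measure.map_apply he.measurable hs, Measure.map_apply hval (he.measurable hs),
    Measure.map_apply hval hs, Measure.toSphere_apply' _ (hval (he.measurable hs)),
    Measure.toSphere_apply' _ (hval hs), Subtype.image_preimage_coe, Subtype.image_preimage_coe,
    ← hsector, hinvariant]

end LinearIsometry

theorem isUniformlyDistributedOn_sphere_of_measurePreserving {E : Type*} [NormedAddCommGroup E]
    [InnerProductSpace ℝ E] [MeasurableSpace E] [BorelSpace E] {μ : Measure E} {R : ℝ}
    (hsupp : μ (sphere 0 R)ᶜ = 0) (hμ : ∀ e : E ≃ₗᵢ[ℝ] E, MeasurePreserving e μ μ) :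
    IsUniformlyDistributedOn μ (sphere 0 R) where
  measure_compl := hsupp
  measure_closedBall_eq x hx y hy r := by
    have hxy : ‖x‖ = ‖y‖ := by simp_all
    let e : E ≃ₗᵢ[ℝ] E := (ℝ ∙ (x - y))ᗮ.reflection
    have he : e x = y := Submodule.reflection_sub hxy
    rw [← e.isometry.preimage_closedBall, he,
      (hμ e).measure_preimage measurableSet_closedBall.nullMeasurableSet]

section HausdorffSphere

variable {E : Type*} [NormedAddCommGroup E] [InnerProductSpace ℝ E]

open Module (finrank)

theorem closedBall_subset_image_orthogonalProjection_sphere {v : E} (hv : ‖v‖ = 1) :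
    closedBall 0 1 ⊆ (ℝ ∙ v)ᗮ.orthogonalProjectionOnto '' sphere 0 1 := by
  intro w hw
  have hw1 : ‖w‖ ≤ 1 := by simpa using hw
  have hsq : ‖(w : E) + √(1 - ‖w‖ ^ 2) • v‖ ^ 2 = 1 := by
    have horth : ⟪(w : E), v⟫ = 0 := Submodule.mem_orthogonal_singleton_iff_inner_left.1 w.2
    rw [norm_add_sq_real, norm_smul, inner_smul_right, horth, hv, mul_one, Real.norm_eq_abs, sq_abs,
      Real.sq_sqrt (by nlinarith [norm_nonneg w])]
    simp
  refine ⟨w + √(1 - ‖w‖ ^ 2) • v, ?_, ?_⟩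
  · simpa [pow_eq_one_iff_of_nonneg] using hsq
  · simp [Submodule.orthogonalProjectionOnto_orthogonalComplement_singleton_eq_zero]

theorem hemisphere_subset_image_stereoInvFunAux {v : E} (hv : ‖v‖ = 1) :
    {x ∈ sphere (0 : E) 1 | ⟪v, x⟫ ≤ 0} ⊆
      (fun w : (ℝ ∙ v)ᗮ => stereoInvFunAux v w) '' closedBall 0 2 := by
  rintro x ⟨hx, hvx⟩
  have hxv : x ≠ v := by
    rintro rfl
    rw [real_inner_self_eq_norm_sq, hv] at hvx
    norm_num at hvx
  refine ⟨stereoToFun v x, ?_, congrArg Subtype.val (stereo_left_inv hv (x := ⟨x, hx⟩) hxv)⟩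
  have hproj : ‖(ℝ ∙ v)ᗮ.orthogonalProjectionOnto x‖ ≤ 1 := by
    simpa [mem_sphere_zero_iff_norm.1 hx] using (ℝ ∙ v)ᗮ.norm_orthogonalProjectionOnto_apply_le x
  have hcoef : 2 / (1 - ⟪v, x⟫) ≤ 2 := by
    rw [div_le_iff₀ (by linarith)]
    linarith
  have hpos : 0 ≤ 2 / (1 - ⟪v, x⟫) := div_nonneg zero_le_two (by linarith)
  rw [mem_closedBall_zero_iff, stereoToFun_apply, norm_smul, innerSL_apply_apply, Real.norm_eq_abs,
    abs_of_nonneg hpos]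
  nlinarith [norm_nonneg ((ℝ ∙ v)ᗮ.orthogonalProjectionOnto x)]

variable [FiniteDimensional ℝ E]

theorem cast_finrank_orthogonal_span_singleton {v : E} (hv : v ≠ 0) :
    (finrank ℝ (ℝ ∙ v)ᗮ : ℝ) = finrank ℝ E - 1 := by
  rw [← Submodule.finrank_add_finrank_orthogonal (ℝ ∙ v), finrank_span_singleton hv]
  push_cast
  ring

variable [MeasurableSpace E] [BorelSpace E]

theorem hausdorffMeasure_hemisphere_lt_top {v : E} (hv : ‖v‖ = 1) :
    μH[(finrank ℝ E : ℝ) - 1] {x ∈ sphere (0 : E) 1 | ⟪v, x⟫ ≤ 0} < ⊤ := by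
  rw [← cast_finrank_orthogonal_span_singleton (norm_ne_zero_iff.1 (hv ▸ one_ne_zero))]
  have hsmooth : ContDiff ℝ 1 fun w : (ℝ ∙ v)ᗮ => stereoInvFunAux v w :=
    contDiff_stereoInvFunAux.comp (ℝ ∙ v)ᗮ.subtypeL.contDiff
  obtain ⟨K, hK⟩ := (hsmooth.locallyLipschitz.locallyLipschitzOn
    (s := closedBall 0 2)).exists_lipschitzOnWith_of_compact (isCompact_closedBall 0 2)
  refine (measure_mono (hemisphere_subset_image_stereoInvFunAux hv)).trans_lt
    ((hK.hausdorffMeasure_image_le (Nat.cast_nonneg _)).trans_lt ?_)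
  have := isAddHaarMeasure_hausdorffMeasure (E := (ℝ ∙ v)ᗮ)
  exact ENNReal.mul_lt_top (ENNReal.rpow_lt_top_of_nonneg (by positivity) ENNReal.coe_ne_top)
    measure_closedBall_lt_top

variable [Nontrivial E]

variable (E) in
theorem hausdorffMeasure_unitSphere_lt_top :
    μH[(finrank ℝ E : ℝ) - 1] (sphere (0 : E) 1) < ⊤ := by
  obtain ⟨v, hv⟩ := exists_norm_eq E zero_le_one
  have hcover : sphere (0 : E) 1 ⊆
      {x ∈ sphere (0 : E) 1 | ⟪v, x⟫ ≤ 0} ∪ {x ∈ sphere (0 : E) 1 | ⟪-v, x⟫ ≤ 0} := by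
    intro x hx
    rcases le_total ⟪v, x⟫ 0 with h | h
    · exact .inl ⟨hx, h⟩
    · exact .inr ⟨hx, by simpa using h⟩
  exact (measure_mono hcover).trans_lt (measure_union_lt_top
    (hausdorffMeasure_hemisphere_lt_top hv)
    (hausdorffMeasure_hemisphere_lt_top ((norm_neg v).trans hv)))

variable (E) in
theorem hausdorffMeasure_unitSphere_pos :
    0 < μH[(finrank ℝ E : ℝ) - 1] (sphere (0 : E) 1) := by
  obtain ⟨v, hv⟩ := exists_norm_eq E zero_le_one
  rw [← cast_finrank_orthogonal_span_singleton (norm_ne_zero_iff.1 (hv ▸ one_ne_zero))]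
  have := isAddHaarMeasure_hausdorffMeasure (E := (ℝ ∙ v)ᗮ)
  calc 0 < μH[finrank ℝ (ℝ ∙ v)ᗮ] (closedBall (0 : (ℝ ∙ v)ᗮ) 1) :=
        measure_closedBall_pos _ _ one_pos
    _ ≤ μH[finrank ℝ (ℝ ∙ v)ᗮ] ((ℝ ∙ v)ᗮ.orthogonalProjectionOnto '' sphere 0 1) :=
        measure_mono (closedBall_subset_image_orthogonalProjection_sphere hv)
    _ ≤ μH[finrank ℝ (ℝ ∙ v)ᗮ] (sphere 0 1) :=
        hausdorffMeasure_orthogonalProjectionOnto_le _ _ _ (Nat.cast_nonneg _)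

variable (E) in
theorem exists_map_toSphere_eq_smul_hausdorffMeasure :
    ∃ c : ENNReal, (volume : Measure E).toSphere.map Subtype.val
      = c • μH[(finrank ℝ E : ℝ) - 1].restrict (sphere 0 1) := by
  have hsphere : MeasurableSet (sphere (0 : E) 1) := isClosed_sphere.measurableSet
  have hfin := hausdorffMeasure_unitSphere_lt_top E
  have hpos := hausdorffMeasure_unitSphere_pos E
  set ρ := (volume : Measure E).toSphere.map Subtype.val
  set ν := μH[(finrank ℝ E : ℝ) - 1].restrict (sphere (0 : E) 1)
  have hνuniv : ν Set.univ = μH[(finrank ℝ E : ℝ) - 1] (sphere (0 : E) 1) :=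
    Measure.restrict_apply_univ _
  have : IsFiniteMeasure ν := isFiniteMeasure_restrict.2 hfin.ne
  have : IsFiniteMeasure ρ := Measure.isFiniteMeasure_map _ _
  have hρ : IsUniformlyDistributedOn ρ (sphere 0 1) := by
    refine isUniformlyDistributedOn_sphere_of_measurePreserving ?_ fun e =>
      measurePreserving_map_toSphere e e.measurePreserving
    rw [Measure.map_apply measurable_subtype_coe hsphere.compl]
    simp
  have hν : IsUniformlyDistributedOn ν (sphere 0 1) := by
    refine isUniformlyDistributedOn_sphere_of_measurePreserving ?_ fun e =>
      measurePreserving_hausdorffMeasure_restrict_sphere _ 1 e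
    exact ae_restrict_mem hsphere
  refine ⟨(ν Set.univ)⁻¹ * ρ Set.univ, ?_⟩
  rw [mul_smul, ← hρ.measure_univ_smul_eq hν, smul_smul, hνuniv,
    ENNReal.inv_mul_cancel hpos.ne' hfin.ne, one_smul]

end HausdorffSphere

section DivergenceTheorem

open scoped Pointwise in
theorem hausdorffMeasure_restrict_sphere_eq_smul_map {E : Type*} [NormedAddCommGroup E]
    [NormedSpace ℝ E] [MeasurableSpace E] [BorelSpace E] {d R : ℝ} (hd : 0 ≤ d) (hR : 0 < R) :
    μH[d].restrict (sphere (0 : E) R)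
      = ENNReal.ofReal (R ^ d) • (μH[d].restrict (sphere (0 : E) 1)).map (R • ·) := by
  ext s hs
  have hmeas : Measurable (fun x : E => R • x) := (continuous_const_smul R).measurable
  have hscale : s ∩ sphere 0 R = R • ((R • ·) ⁻¹' s ∩ sphere (0 : E) 1) := by
    ext x
    simp only [Set.mem_smul_set_iff_inv_smul_mem₀ hR.ne', Set.mem_inter_iff, Set.mem_preimage,
      mem_sphere_zero_iff_norm, smul_inv_smul₀ hR.ne', norm_smul, norm_inv,
      Real.norm_of_nonneg hR.le, inv_mul_eq_one₀ hR.ne', eq_comm (a := R)]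
  have hfactor : ENNReal.ofReal (R ^ d) = (‖R‖₊ ^ d : NNReal) := by
    rw [ENNReal.ofReal, Real.toNNReal_rpow_of_nonneg hR.le,
      Real.toNNReal_eq_nnnorm_of_nonneg hR.le]
  rw [Measure.smul_apply, Measure.map_apply hmeas hs, Measure.restrict_apply hs,
    Measure.restrict_apply (hmeas hs), hscale, Measure.hausdorffMeasure_smul₀ hd hR.ne', hfactor,
    ENNReal.smul_def]

theorem setIntegral_sphere_hausdorffMeasure_eq_rpow_smul {E F : Type*} [NormedAddCommGroup E]
    [NormedSpace ℝ E] [MeasurableSpace E] [BorelSpace E] [NormedAddCommGroup F] [NormedSpace ℝ F]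
    {d R : ℝ} (hd : 0 ≤ d) (hR : 0 < R) (f : E → F) :
    ∫ x in sphere 0 R, f x ∂μH[d] = R ^ d • ∫ x in sphere 0 1, f (R • x) ∂μH[d] := by
  rw [hausdorffMeasure_restrict_sphere_eq_smul_map hd hR, integral_smul_measure,
    ENNReal.toReal_ofReal (by positivity)]
  congr 1
  exact (Homeomorph.smulOfNeZero R hR.ne').measurableEmbedding.integral_map f

theorem exists_setIntegral_ball_vdiv_eq_mul_integral_sphere (N : ℕ) :
    ∃ c : ℝ, ∀ {V : EuclideanSpace ℝ (Fin N) → EuclideanSpace ℝ (Fin N)}, ContDiff ℝ 1 V →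
      ∀ {R : ℝ}, 0 < R → ∫ x in ball 0 R, vdiv V x
        = c * ∫ x in sphere 0 R, ⟪V x, ‖x‖⁻¹ • x⟫ ∂μH[(N : ℝ) - 1] := by
  rcases N.eq_zero_or_pos with rfl | hN
  · refine ⟨0, fun _ _ _ => ?_⟩
    simp only [vdiv, Finset.univ_eq_empty, Finset.sum_empty, integral_zero, zero_mul]
  have : NeZero N := ⟨hN.ne'⟩
  obtain ⟨c, hc⟩ := exists_map_toSphere_eq_smul_hausdorffMeasure (EuclideanSpace ℝ (Fin N))
  rw [finrank_euclideanSpace_fin] at hc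
  refine ⟨c.toReal, fun {V} hV {R} hR => ?_⟩
  have hcast : (N : ℝ) - 1 = (N - 1 : ℕ) := by rw [Nat.cast_pred hN]
  have hnormal : ∫ x in sphere 0 1, ⟪V (R • x), ‖R • x‖⁻¹ • R • x⟫ ∂μH[(N : ℝ) - 1]
      = ∫ x in sphere 0 1, ⟪x, V (R • x)⟫ ∂μH[(N : ℝ) - 1] := by
    refine setIntegral_congr_fun isClosed_sphere.measurableSet fun x hx => ?_
    rw [norm_smul, mem_sphere_zero_iff_norm.1 hx, mul_one, Real.norm_of_nonneg hR.le,
      inv_smul_smul₀ hR.ne', real_inner_comm]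
  have htransfer : ∫ ω : sphere (0 : EuclideanSpace ℝ (Fin N)) 1,
        ⟪(ω : EuclideanSpace ℝ (Fin N)), V (R • ω)⟫
          ∂(volume : Measure (EuclideanSpace ℝ (Fin N))).toSphere
      = c.toReal * ∫ x in sphere 0 1, ⟪x, V (R • x)⟫ ∂μH[(N : ℝ) - 1] := by
    rw [← smul_eq_mul, ← integral_smul_measure, ← hc]
    exact ((MeasurableEmbedding.subtype_coe isClosed_sphere.measurableSet).integral_map
      (fun x => ⟪x, V (R • x)⟫)).symm
  rw [setIntegral_ball_vdiv_eq_integral_toSphere hV hR, htransfer,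
    setIntegral_sphere_hausdorffMeasure_eq_rpow_smul (hcast ▸ Nat.cast_nonneg _) hR, hnormal,
    hcast, Real.rpow_natCast, smul_eq_mul, mul_left_comm]

end DivergenceTheorem

section ConservationLaw

theorem setIntegral_ball_sub_eq_intervalIntegral_of_hasDerivAt {X E : Type*}
    [MetricSpace X] [ProperSpace X] [MeasurableSpace X] [OpensMeasurableSpace X]
    {μ : Measure X} [IsFiniteMeasureOnCompacts μ] [NormedAddCommGroup E] [NormedSpace ℝ E]
    [CompleteSpace E] {f : X → ℝ → E} {f' : ℝ → X → E} {x₀ : X} {r a b : ℝ}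
    (hfa : IntegrableOn (f · a) (ball x₀ r) μ) (hfb : IntegrableOn (f · b) (ball x₀ r) μ)
    (hf : ∀ x t, HasDerivAt (f x) (f' t x) t) (hf' : Continuous (Function.uncurry f')) :
    (∫ x in ball x₀ r, f x b ∂μ) - ∫ x in ball x₀ r, f x a ∂μ
      = ∫ t in a..b, ∫ x in ball x₀ r, f' t x ∂μ := by
  have hprod : Integrable (Function.uncurry f')
      ((volume.restrict (Set.uIoc a b)).prod (μ.restrict (ball x₀ r))) := by
    rw [Measure.prod_restrict]
    exact (hf'.continuousOn.integrableOn_compact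
      (isCompact_uIcc.prod (isCompact_closedBall x₀ r))).mono_set
        (Set.prod_mono Set.uIoc_subset_uIcc ball_subset_closedBall)
  rw [intervalIntegral_integral_swap hprod, ← integral_sub hfb hfa]
  refine integral_congr_ae (.of_forall fun x => ?_)
  refine (intervalIntegral.integral_eq_sub_of_hasDerivAt (fun t _ => hf x t) ?_).symm
  exact (hf'.comp (Continuous.prodMk_left x)).intervalIntegrable a b

theorem integral_eq_of_hasDerivAt_vdiv {N : ℕ} {h : EuclideanSpace ℝ (Fin N) → ℝ → ℝ}
    {V : ℝ → EuclideanSpace ℝ (Fin N) → EuclideanSpace ℝ (Fin N)}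
    {R : ℕ → ℝ} (hR : Tendsto R atTop atTop) {a b : ℝ}
    (hinta : Integrable (h · a)) (hintb : Integrable (h · b))
    (hder : ∀ x t, HasDerivAt (h x) (vdiv (V t) x) t) (hV : ∀ t, ContDiff ℝ 1 (V t))
    (hdiv : Continuous fun q : ℝ × EuclideanSpace ℝ (Fin N) => vdiv (V q.1) q.2)
    (hflux : Tendsto (fun k => ∫ s in a..b, ∫ x in sphere 0 (R k),
      ⟪V s x, ‖x‖⁻¹ • x⟫ ∂μH[(N : ℝ) - 1]) atTop (nhds 0)) :
    ∫ x, h x b = ∫ x, h x a := by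
  obtain ⟨c, hc⟩ := exists_setIntegral_ball_vdiv_eq_mul_integral_sphere N
  have hball {t : ℝ} (ht : Integrable (h · t)) :
      Tendsto (fun k => ∫ x in ball 0 (R k), h x t) atTop (nhds (∫ x, h x t)) :=
    (aecover_ball hR).integral_tendsto_of_countably_generated ht
  have hbalance : ∀ᶠ k in atTop,
      (∫ x in ball 0 (R k), h x b) - ∫ x in ball 0 (R k), h x a
        = c * ∫ s in a..b, ∫ x in sphere 0 (R k), ⟪V s x, ‖x‖⁻¹ • x⟫ ∂μH[(N : ℝ) - 1] := by
    filter_upwards [hR.eventually_gt_atTop 0] with k hk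
    rw [setIntegral_ball_sub_eq_intervalIntegral_of_hasDerivAt hinta.integrableOn
      hintb.integrableOn hder hdiv, ← intervalIntegral.integral_const_mul]
    exact intervalIntegral.integral_congr fun s _ => hc (hV s) hk
  have hlim := (hflux.const_mul c).congr' (hbalance.mono fun _ hk => hk.symm)
  rw [mul_zero] at hlim
  exact sub_eq_zero.1 (tendsto_nhds_unique ((hball hintb).sub (hball hinta)) hlim)

end ConservationLaw

/-! ### The stress tensor of the `p`-Laplacian -/

section PowerSingularity

variable {E F : Type*} [NormedAddCommGroup E] [NormedSpace ℝ E] [NormedAddCommGroup F]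
  [NormedSpace ℝ F] {f : E → F} {C p : ℝ}

theorem hasFDerivAt_zero_of_norm_le_mul_norm_rpow (hp : 1 < p)
    (hf : ∀ v, ‖f v‖ ≤ C * ‖v‖ ^ p) : HasFDerivAt f (0 : E →L[ℝ] F) 0 := by
  have hp0 : (0 : ℝ) ^ p = 0 := Real.zero_rpow (zero_lt_one.trans hp).ne'
  have hf0 : f 0 = 0 := by
    rw [← norm_le_zero_iff]
    simpa only [norm_zero, hp0, mul_zero] using hf 0
  have hpow : (fun v : E => ‖v‖ ^ p) =o[nhds 0] fun v => v := by
    have habs := hasDerivAt_iff_isLittleO_nhds_zero.1 (hasDerivAt_abs_rpow 0 hp)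
    simp only [zero_add, abs_zero, hp0, mul_zero, smul_zero, sub_zero] at habs
    simpa only [Function.comp_def, abs_norm] using
      Asymptotics.isLittleO_norm_right.1 (habs.comp_tendsto (tendsto_norm_zero (E := E)))
  rw [hasFDerivAt_iff_isLittleO_nhds_zero]
  refine (Asymptotics.IsBigO.of_bound C (.of_forall fun v => ?_)).trans_isLittleO hpow
  simpa only [zero_add, hf0, sub_zero, zero_apply,
    Real.norm_of_nonneg (Real.rpow_nonneg (norm_nonneg v) p)] using hf v

theorem contDiff_one_of_norm_fderiv_le_mul_norm_rpow {r : ℝ} (hr : 0 < r)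
    (hf0 : HasFDerivAt f (0 : E →L[ℝ] F) 0) (hf : ∀ v ≠ 0, ContDiffAt ℝ 1 f v)
    (hbound : ∀ v ≠ 0, ‖fderiv ℝ f v‖ ≤ C * ‖v‖ ^ r) : ContDiff ℝ 1 f := by
  refine contDiff_one_iff_fderiv.2 ⟨fun v => ?_, continuous_iff_continuousAt.2 fun v => ?_⟩
  · rcases eq_or_ne v 0 with rfl | hv
    exacts [hf0.differentiableAt, (hf v hv).differentiableAt one_ne_zero]
  · rcases eq_or_ne v 0 with rfl | hv
    · have hzero : C * ‖(0 : E)‖ ^ r = 0 := by rw [norm_zero, Real.zero_rpow hr.ne', mul_zero]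
      have hlim : Tendsto (fun v : E => C * ‖v‖ ^ r) (nhds 0) (nhds 0) := by
        have hcont : Continuous fun v : E => C * ‖v‖ ^ r :=
          continuous_const.mul (continuous_norm.rpow_const fun _ => Or.inr hr.le)
        simpa only [hzero] using hcont.tendsto 0
      rw [ContinuousAt, hf0.fderiv]
      refine squeeze_zero_norm (fun v => ?_) hlim
      rcases eq_or_ne v 0 with rfl | hv
      exacts [by rw [hf0.fderiv, norm_zero, hzero], hbound v hv]
    · exact (hf v hv).continuousAt_fderiv one_ne_zero

end PowerSingularity

section Stress

theorem norm_norm_rpow_smul_self {E : Type*} [NormedAddCommGroup E] [NormedSpace ℝ E] {v : E}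
    (hv : v ≠ 0) (q : ℝ) : ‖‖v‖ ^ q • v‖ = ‖v‖ ^ (q + 1) := by
  rw [norm_smul, Real.norm_of_nonneg (by positivity), Real.rpow_add_one (norm_ne_zero_iff.2 hv)]

variable {E : Type*} [NormedAddCommGroup E] [InnerProductSpace ℝ E] {p : ℝ} {v : E}

theorem contDiffAt_norm_rpow_smul_self (hv : v ≠ 0) (q : ℝ) :
    ContDiffAt ℝ 1 (fun w : E => ‖w‖ ^ q • w) v :=
  ((contDiffAt_norm ℝ hv).rpow_const_of_ne (norm_ne_zero_iff.2 hv)).smul contDiffAt_id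

theorem norm_fderiv_norm_rpow_smul_self_le (hv : v ≠ 0) (q : ℝ) :
    ‖fderiv ℝ (fun w : E => ‖w‖ ^ q • w) v‖ ≤ (1 + |q|) * ‖v‖ ^ q := by
  have hnorm : HasFDerivAt (fun w : E => ‖w‖) (fderiv ℝ (fun w : E => ‖w‖) v) v :=
    ((contDiffAt_norm (n := 1) ℝ hv).differentiableAt one_ne_zero).hasFDerivAt
  have hle : ‖fderiv ℝ (fun w : E => ‖w‖) v‖ ≤ 1 := by
    simpa only [NNReal.coe_one] using
      norm_fderiv_le_of_lipschitz ℝ (x₀ := v) (lipschitzWith_one_norm (E := E))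
  have hv' : 0 < ‖v‖ := norm_pos_iff.2 hv
  have hpow := hnorm.rpow_const (p := q) (Or.inl hv'.ne')
  have hself : HasFDerivAt (fun w : E => w) (ContinuousLinearMap.id ℝ E) v := hasFDerivAt_id v
  rw [(hpow.fun_smul hself).fderiv]
  have hid : ‖‖v‖ ^ q • ContinuousLinearMap.id ℝ E‖ ≤ ‖v‖ ^ q * 1 := by
    rw [norm_smul, Real.norm_of_nonneg (by positivity)]
    gcongr
    exact ContinuousLinearMap.norm_id_le
  have hrad : ‖((q * ‖v‖ ^ (q - 1)) • fderiv ℝ (fun w : E => ‖w‖) v).smulRight v‖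
      ≤ |q| * ‖v‖ ^ (q - 1) * 1 * ‖v‖ := by
    rw [ContinuousLinearMap.norm_smulRight_apply, norm_smul, norm_mul, Real.norm_eq_abs,
      Real.norm_of_nonneg (by positivity)]
    gcongr
  calc _ ≤ ‖v‖ ^ q * 1 + |q| * ‖v‖ ^ (q - 1) * 1 * ‖v‖ := norm_add_le_of_le hid hrad
    _ = (1 + |q|) * ‖v‖ ^ q := by
        rw [Real.rpow_sub_one hv'.ne']
        field_simp

/-- The stress of the `p`-Laplace energy density `‖∇u‖ ^ p / p` in the direction `e`, as a function
of the gradient `v = ∇u`: the flux of the momentum associated with translations along `e`. -/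
def stressVector (p : ℝ) (e v : E) : E :=
  ⟪e, v⟫ • ‖v‖ ^ (p - 2) • v

theorem norm_stressVector_le (hp : 1 < p) (e v : E) :
    ‖stressVector p e v‖ ≤ ‖e‖ * ‖v‖ ^ p := by
  rcases eq_or_ne v 0 with rfl | hv
  · rw [stressVector, inner_zero_right, zero_smul, norm_zero]
    positivity
  rw [stressVector, norm_smul, norm_norm_rpow_smul_self hv]
  calc ‖⟪e, v⟫‖ * ‖v‖ ^ (p - 2 + 1) ≤ ‖e‖ * ‖v‖ * ‖v‖ ^ (p - 2 + 1) := by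
        gcongr
        exact norm_inner_le_norm e v
    _ = ‖e‖ * ‖v‖ ^ p := by
        rw [mul_assoc, ← Real.rpow_one_add' (norm_nonneg v) (by linarith)]
        congr 2
        ring

theorem hasFDerivAt_stressVector_zero (hp : 1 < p) (e : E) :
    HasFDerivAt (stressVector p e) (0 : E →L[ℝ] E) 0 :=
  hasFDerivAt_zero_of_norm_le_mul_norm_rpow hp (norm_stressVector_le hp e)

theorem norm_fderiv_stressVector_le (e : E) (hv : v ≠ 0) :
    ‖fderiv ℝ (stressVector p e) v‖ ≤ ((1 + |p - 2|) + 1) * ‖e‖ * ‖v‖ ^ (p - 1) := by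
  have hflux := ((contDiffAt_norm_rpow_smul_self hv (p - 2)).differentiableAt
    one_ne_zero).hasFDerivAt
  have hle := norm_fderiv_norm_rpow_smul_self_le hv (p - 2)
  have hinner := (innerSL ℝ e).hasFDerivAt (x := v)
  have hstress : fderiv ℝ (stressVector p e) v = _ := (hinner.smul hflux).fderiv
  have hpow : ‖v‖ ^ (p - 1) = ‖v‖ * ‖v‖ ^ (p - 2) := by
    rw [mul_comm, ← Real.rpow_add_one (norm_ne_zero_iff.2 hv)]
    congr 1
    ring
  have htang : ‖⟪e, v⟫ • fderiv ℝ (fun w : E => ‖w‖ ^ (p - 2) • w) v‖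
      ≤ ‖e‖ * ‖v‖ * ((1 + |p - 2|) * ‖v‖ ^ (p - 2)) := by
    rw [norm_smul]
    gcongr
    exact norm_inner_le_norm e v
  have hrank : ‖(innerSL ℝ e).smulRight (‖v‖ ^ (p - 2) • v)‖ ≤ ‖e‖ * ‖v‖ ^ (p - 1) := by
    rw [ContinuousLinearMap.norm_smulRight_apply, innerSL_apply_norm, norm_norm_rpow_smul_self hv,
      show p - 2 + 1 = p - 1 by ring]
  calc ‖fderiv ℝ (stressVector p e) v‖
      ≤ ‖e‖ * ‖v‖ * ((1 + |p - 2|) * ‖v‖ ^ (p - 2)) + ‖e‖ * ‖v‖ ^ (p - 1) :=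
        hstress ▸ norm_add_le_of_le htang hrank
    _ = ((1 + |p - 2|) + 1) * ‖e‖ * ‖v‖ ^ (p - 1) := by
        rw [hpow]
        ring

theorem contDiff_stressVector (hp : 1 < p) (e : E) : ContDiff ℝ 1 (stressVector p e) :=
  contDiff_one_of_norm_fderiv_le_mul_norm_rpow (sub_pos.2 hp) (hasFDerivAt_stressVector_zero hp e)
    (fun _ hv => (innerSL ℝ e).contDiff.contDiffAt.smul (contDiffAt_norm_rpow_smul_self hv _))
    fun _ hv => norm_fderiv_stressVector_le e hv

end Stress

section Gradient

variable {E : Type*} [NormedAddCommGroup E] [InnerProductSpace ℝ E] [CompleteSpace E] {u : E → ℝ}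

theorem contDiff_gradient (hu : ContDiff ℝ 2 u) : ContDiff ℝ 1 (gradient u) :=
  (InnerProductSpace.toDual ℝ E).symm.toContinuousLinearEquiv.contDiff.comp
    (hu.fderiv_right (by norm_num))

theorem inner_fderiv_gradient_comm (hu : ContDiff ℝ 2 u) (x a b : E) :
    ⟪fderiv ℝ (gradient u) x a, b⟫ = ⟪a, fderiv ℝ (gradient u) x b⟫ := by
  have hdiff := (hu.fderiv_right (m := 1) (by norm_num)).differentiable one_ne_zero x
  have hHess : fderiv ℝ (gradient u) x
      = (InnerProductSpace.toDual ℝ E).symm.toContinuousLinearEquiv.toContinuousLinearMap.comp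
          (fderiv ℝ (fderiv ℝ u) x) :=
    ((InnerProductSpace.toDual ℝ E).symm.toContinuousLinearEquiv.hasFDerivAt.comp x
      hdiff.hasFDerivAt).fderiv
  have hsymm := (hu.contDiffAt (x := x)).isSymmSndFDerivAt (by simp) a b
  calc ⟪fderiv ℝ (gradient u) x a, b⟫ = fderiv ℝ (fderiv ℝ u) x a b := by
        rw [hHess]
        exact InnerProductSpace.toDual_symm_apply
    _ = fderiv ℝ (fderiv ℝ u) x b a := hsymm
    _ = ⟪a, fderiv ℝ (gradient u) x b⟫ := by
        rw [hHess, real_inner_comm]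
        exact InnerProductSpace.toDual_symm_apply.symm

end Gradient

theorem vdiv_stressVector_gradient {N : ℕ} {u : EuclideanSpace ℝ (Fin N) → ℝ} {p : ℝ} (hp : 1 < p)
    (hu : ContDiff ℝ 2 u) (e x : EuclideanSpace ℝ (Fin N)) :
    vdiv (fun y => stressVector p e (gradient u y)) x
      = fderiv ℝ (fun y => ‖gradient u y‖ ^ p / p) x e
        + ⟪e, gradient u x⟫ * vdiv (fun y => ‖gradient u y‖ ^ (p - 2) • gradient u y) x := by
  have hgrad := (contDiff_gradient hu).differentiable one_ne_zero
  have henergy : fderiv ℝ (fun y => ‖gradient u y‖ ^ p / p) x e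
      = ‖gradient u x‖ ^ (p - 2) * ⟪gradient u x, fderiv ℝ (gradient u) x e⟫ := by
    have hp0 : p ≠ 0 := by linarith
    simp only [div_eq_mul_inv]
    rw [fderiv_mul_const (hgrad.norm_rpow hp x), hgrad.fderiv_norm_rpow hp]
    simp only [smul_apply, ContinuousLinearMap.comp_apply, innerSL_apply_apply, smul_eq_mul]
    field_simp
  rw [henergy]
  -- For `p < 2` the flux need not be differentiable at critical points of `u`.
  rcases eq_or_ne (gradient u x) 0 with h0 | h0
  · have hstress : fderiv ℝ (fun y => stressVector p e (gradient u y)) x = 0 := by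
      have h : HasFDerivAt (stressVector p e) 0 (gradient u x) :=
        h0 ▸ hasFDerivAt_stressVector_zero hp e
      exact (h.comp x (hgrad x).hasFDerivAt).fderiv.trans (ContinuousLinearMap.zero_comp _)
    rw [h0, inner_zero_left, inner_zero_right, mul_zero, zero_mul, add_zero, vdiv, hstress]
    simp
  · have hflux : DifferentiableAt ℝ (fun y => ‖gradient u y‖ ^ (p - 2) • gradient u y) x :=
      ((contDiffAt_norm_rpow_smul_self h0 _).differentiableAt one_ne_zero).comp x (hgrad x)
    have hinner : HasFDerivAt (fun y => ⟪e, gradient u y⟫)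
        ((innerSL ℝ e).comp (fderiv ℝ (gradient u) x)) x :=
      (innerSL ℝ e).hasFDerivAt.comp x (hgrad x).hasFDerivAt
    simp only [stressVector]
    rw [vdiv_smul hinner.differentiableAt hflux, hinner.fderiv, ContinuousLinearMap.comp_apply,
      innerSL_apply_apply, ← inner_fderiv_gradient_comm hu, inner_smul_right,
      real_inner_comm _ (fderiv ℝ (gradient u) x e), add_comm]

section EnergyMomentum

variable {N : ℕ} {ι : Type*} [Fintype ι] {p : ℝ} {u : ι → EuclideanSpace ℝ (Fin N) → ℝ}

/-- The Lagrangian density `∑ᵢ |∇uᵢ|ᵖ / p - H̃(u)` of the `p`-Laplacian system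
`-div(|∇uᵢ|^{p-2}∇uᵢ) = ∂ᵢH̃(u)`. -/
def lagrangianDensity (p : ℝ) (Ht : (ι → ℝ) → ℝ) (u : ι → EuclideanSpace ℝ (Fin N) → ℝ)
    (x : EuclideanSpace ℝ (Fin N)) : ℝ :=
  ∑ i, ‖gradient (u i) x‖ ^ p / p - Ht (fun j => u j x)

/-- The total stress in the direction `e` of a family of functions `u`: up to the subtraction of
`lagrangianDensity • e`, the `e`-row of the energy-momentum tensor of the system. -/
def stressField (p : ℝ) (e : EuclideanSpace ℝ (Fin N)) (u : ι → EuclideanSpace ℝ (Fin N) → ℝ)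
    (x : EuclideanSpace ℝ (Fin N)) : EuclideanSpace ℝ (Fin N) :=
  ∑ i, stressVector p e (gradient (u i) x)

theorem contDiff_stressField (hp : 1 < p) (e : EuclideanSpace ℝ (Fin N))
    (hu : ∀ i, ContDiff ℝ 2 (u i)) : ContDiff ℝ 1 (stressField p e u) :=
  ContDiff.sum fun i _ => (contDiff_stressVector hp e).comp (contDiff_gradient (hu i))

theorem differentiable_norm_gradient_rpow_div (hp : 1 < p)
    {w : EuclideanSpace ℝ (Fin N) → ℝ} (hw : ContDiff ℝ 2 w) :
    Differentiable ℝ fun x => ‖gradient w x‖ ^ p / p := by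
  simpa only [div_eq_mul_inv] using
    (((contDiff_gradient hw).differentiable one_ne_zero).norm_rpow hp).mul_const p⁻¹

theorem fderiv_comp_pi_apply [DecidableEq ι] {E : Type*} [NormedAddCommGroup E] [NormedSpace ℝ E]
    {f : (ι → ℝ) → ℝ} {w : ι → E → ℝ} {x : E} (hf : DifferentiableAt ℝ f fun i => w i x)
    (hw : ∀ i, DifferentiableAt ℝ (w i) x) (v : E) :
    fderiv ℝ (fun y => f fun i => w i y) x v
      = ∑ i, fderiv ℝ f (fun i => w i x) (Pi.single i 1) * fderiv ℝ (w i) x v := by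
  have hcomp := (hf.hasFDerivAt.comp x (hasFDerivAt_pi.2 fun i => (hw i).hasFDerivAt)).fderiv
  have hpartials : (fun i => fderiv ℝ (w i) x v)
      = ∑ i, fderiv ℝ (w i) x v • (Pi.single i 1 : ι → ℝ) := by
    simp only [← Pi.single_smul, smul_eq_mul, mul_one, Finset.univ_sum_single]
  calc fderiv ℝ (fun y => f fun i => w i y) x v
      = fderiv ℝ f (fun i => w i x) (fun i => fderiv ℝ (w i) x v) := congrArg (· v) hcomp
    _ = _ := by simp only [hpartials, map_sum, map_smul, smul_eq_mul, mul_comm]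

theorem differentiable_lagrangianDensity (hp : 1 < p) {Ht : (ι → ℝ) → ℝ}
    (hHt : Differentiable ℝ Ht) (hu : ∀ i, ContDiff ℝ 2 (u i)) :
    Differentiable ℝ (lagrangianDensity p Ht u) :=
  (Differentiable.fun_sum fun i _ => differentiable_norm_gradient_rpow_div hp (hu i)).sub
    (hHt.comp (differentiable_pi.2 fun i => (hu i).differentiable two_ne_zero))

theorem vdiv_stressField [DecidableEq ι] (hp : 1 < p) {Ht : (ι → ℝ) → ℝ}
    (hHt : Differentiable ℝ Ht) (hu : ∀ i, ContDiff ℝ 2 (u i)) {x : EuclideanSpace ℝ (Fin N)}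
    (hsol : ∀ i, -vdiv (fun y => ‖gradient (u i) y‖ ^ (p - 2) • gradient (u i) y) x
      = fderiv ℝ Ht (fun j => u j x) (Pi.single i 1)) (e : EuclideanSpace ℝ (Fin N)) :
    vdiv (stressField p e u) x = fderiv ℝ (lagrangianDensity p Ht u) x e := by
  have hudiff (i : ι) : Differentiable ℝ (u i) := (hu i).differentiable two_ne_zero
  have hstress (i : ι) : Differentiable ℝ fun y => stressVector p e (gradient (u i) y) :=
    ((contDiff_stressVector hp e).comp (contDiff_gradient (hu i))).differentiable one_ne_zero
  have henergy (i : ι) := differentiable_norm_gradient_rpow_div hp (hu i) x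
  have hLagrangian : fderiv ℝ (lagrangianDensity p Ht u) x e
      = ∑ i, fderiv ℝ (fun y => ‖gradient (u i) y‖ ^ p / p) x e
        - fderiv ℝ (fun y => Ht fun j => u j y) x e := by
    have hpot : DifferentiableAt ℝ (fun y => Ht fun j => u j y) x :=
      (hHt.comp (differentiable_pi.2 hudiff)) x
    have h : fderiv ℝ (lagrangianDensity p Ht u) x = _ :=
      ((HasFDerivAt.fun_sum fun i (_ : i ∈ Finset.univ) => (henergy i).hasFDerivAt).fun_sub
        hpot.hasFDerivAt).fderiv
    rw [h, _root_.sub_apply, _root_.sum_apply]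
  rw [hLagrangian, fderiv_comp_pi_apply (hHt _) fun i => hudiff i x, ← Finset.sum_sub_distrib]
  refine (vdiv_sum _ fun i _ => hstress i x).trans (Finset.sum_congr rfl fun i _ => ?_)
  rw [vdiv_stressVector_gradient hp (hu i), real_inner_comm, inner_gradient_left, ← hsol i]
  ring

end EnergyMomentum

section Slices

theorem gradient_comp_eq_adjoint {E F : Type*} [NormedAddCommGroup E] [InnerProductSpace ℝ E]
    [CompleteSpace E] [NormedAddCommGroup F] [InnerProductSpace ℝ F] [CompleteSpace F]
    {f : F → ℝ} {φ : E → F} {A : E →L[ℝ] F} {x : E} (hf : DifferentiableAt ℝ f (φ x))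
    (hφ : HasFDerivAt φ A x) :
    gradient (fun y => f (φ y)) x = A.adjoint (gradient f (φ x)) := by
  refine ext_inner_right ℝ fun z => ?_
  rw [inner_gradient_left, ContinuousLinearMap.adjoint_inner_left, inner_gradient_left]
  exact congrArg (· z) (hf.hasFDerivAt.comp x hφ).fderiv

variable {n : ℕ}

/-- The projection `(x', t) ↦ x'` of `ℝⁿ⁺¹` onto `ℝⁿ`. Its adjoint is the inclusion of `ℝⁿ` as the
hyperplane `t = 0`. -/
def dropLast (n : ℕ) : EuclideanSpace ℝ (Fin (n + 1)) →L[ℝ] EuclideanSpace ℝ (Fin n) :=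
  (EuclideanSpace.equiv (Fin n) ℝ).symm.toContinuousLinearMap.comp
    (ContinuousLinearMap.pi fun j => EuclideanSpace.proj j.castSucc)

theorem dropLast_apply (v : EuclideanSpace ℝ (Fin (n + 1))) (j : Fin n) :
    dropLast n v j = v j.castSucc := rfl

theorem adjoint_dropLast_single (j : Fin n) :
    (dropLast n).adjoint (EuclideanSpace.single j 1) = EuclideanSpace.single j.castSucc 1 := by
  refine ext_inner_right ℝ fun v => ?_
  rw [ContinuousLinearMap.adjoint_inner_left, EuclideanSpace.inner_single_left,
    EuclideanSpace.inner_single_left, dropLast_apply]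

theorem norm_dropLast_sq_add_sq (v : EuclideanSpace ℝ (Fin (n + 1))) :
    ‖dropLast n v‖ ^ 2 + v (Fin.last n) ^ 2 = ‖v‖ ^ 2 := by
  simp only [EuclideanSpace.real_norm_sq_eq, Fin.sum_univ_castSucc, dropLast_apply]

theorem emb_eq_adjoint_dropLast_add (x : EuclideanSpace ℝ (Fin n)) (t : ℝ) :
    emb x t = (dropLast n).adjoint x + t • EuclideanSpace.single (Fin.last n) 1 := by
  refine ext_inner_right ℝ fun v => ?_
  rw [inner_add_left, ContinuousLinearMap.adjoint_inner_left, inner_smul_left,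
    EuclideanSpace.inner_single_left]
  simp [PiLp.inner_apply, Fin.sum_univ_castSucc, emb, dropLast_apply, mul_comm]

theorem contDiff_emb : ContDiff ℝ 1 fun q : ℝ × EuclideanSpace ℝ (Fin n) => emb q.2 q.1 := by
  simp only [emb_eq_adjoint_dropLast_add]
  fun_prop

theorem hasFDerivAt_emb_left (x : EuclideanSpace ℝ (Fin n)) (t : ℝ) :
    HasFDerivAt (fun y => emb y t) (dropLast n).adjoint x := by
  simp only [emb_eq_adjoint_dropLast_add]
  exact (dropLast n).adjoint.hasFDerivAt.add_const _

theorem hasDerivAt_emb_right (x : EuclideanSpace ℝ (Fin n)) (t : ℝ) :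
    HasDerivAt (emb x) (EuclideanSpace.single (Fin.last n) 1) t := by
  have h := ((hasDerivAt_id t).smul_const
    (EuclideanSpace.single (Fin.last n) (1 : ℝ))).const_add ((dropLast n).adjoint x)
  rw [one_smul] at h
  exact h.congr_of_eventuallyEq (.of_forall (emb_eq_adjoint_dropLast_add x))

theorem gradient_comp_emb {w : EuclideanSpace ℝ (Fin (n + 1)) → ℝ} {x : EuclideanSpace ℝ (Fin n)}
    {t : ℝ} (hw : DifferentiableAt ℝ w (emb x t)) :
    gradient (fun y => w (emb y t)) x = dropLast n (gradient w (emb x t)) := by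
  rw [gradient_comp_eq_adjoint (φ := (emb · t)) hw (hasFDerivAt_emb_left x t),
    ContinuousLinearMap.adjoint_adjoint]

theorem vdiv_dropLast_comp_emb {T : EuclideanSpace ℝ (Fin (n + 1)) → EuclideanSpace ℝ (Fin (n + 1))}
    {x : EuclideanSpace ℝ (Fin n)} {t : ℝ} (hT : DifferentiableAt ℝ T (emb x t)) :
    vdiv (fun y => dropLast n (T (emb y t))) x = vdiv T (emb x t)
      - fderiv ℝ T (emb x t) (EuclideanSpace.single (Fin.last n) 1) (Fin.last n) := by
  have hslice := ((dropLast n).hasFDerivAt.comp x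
    (hT.hasFDerivAt.comp x (hasFDerivAt_emb_left x t))).fderiv
  have hpartial (j : Fin n) : fderiv ℝ (fun y => dropLast n (T (emb y t))) x
      (EuclideanSpace.single j 1) j
        = fderiv ℝ T (emb x t) (EuclideanSpace.single j.castSucc 1) j.castSucc := by
    rw [← adjoint_dropLast_single, ← dropLast_apply]
    exact congrArg (fun L : EuclideanSpace ℝ (Fin n) →L[ℝ] EuclideanSpace ℝ (Fin n) =>
      L (EuclideanSpace.single j 1) j) hslice
  rw [vdiv, vdiv, Fin.sum_univ_castSucc, add_sub_cancel_right]
  exact Finset.sum_congr rfl fun j _ => hpartial j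

theorem continuous_vdiv_dropLast_comp_emb
    {T : EuclideanSpace ℝ (Fin (n + 1)) → EuclideanSpace ℝ (Fin (n + 1))} (hT : ContDiff ℝ 1 T) :
    Continuous fun q : ℝ × EuclideanSpace ℝ (Fin n) =>
      vdiv (fun y => dropLast n (T (emb y q.1))) q.2 := by
  simp only [vdiv_dropLast_comp_emb (hT.differentiable one_ne_zero _)]
  have hemb := (contDiff_emb (n := n)).continuous
  have hpartial := ((hT.continuous_fderiv one_ne_zero).comp hemb).clm_apply
    (continuous_const (y := EuclideanSpace.single (Fin.last n) (1 : ℝ)))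
  exact ((continuous_vdiv hT).comp hemb).sub
    ((EuclideanSpace.proj (Fin.last n) :
      EuclideanSpace ℝ (Fin (n + 1)) →L[ℝ] ℝ).continuous.comp hpartial)

end Slices

section Hamiltonian

variable {n m : ℕ} {p : ℝ} {u : Fin m → EuclideanSpace ℝ (Fin (n + 1)) → ℝ}

theorem pIntegrand_eq_lagrangianDensity_sub (hp : 1 < p) (Ht : (Fin m → ℝ) → ℝ)
    (hu : ∀ i, Differentiable ℝ (u i)) (x : EuclideanSpace ℝ (Fin n)) (t : ℝ) :
    pIntegrand p Ht u x t = lagrangianDensity p Ht u (emb x t)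
      - stressField p (EuclideanSpace.single (Fin.last n) 1) u (emb x t) (Fin.last n) := by
  have hp0 : p ≠ 0 := (zero_lt_one.trans hp).ne'
  have hterm (v : EuclideanSpace ℝ (Fin (n + 1))) :
      ‖v‖ ^ (p - 2) * (1 / p * ‖dropLast n v‖ ^ 2 - (p - 1) / p * v (Fin.last n) ^ 2)
        = ‖v‖ ^ p / p
          - stressVector p (EuclideanSpace.single (Fin.last n) 1) v (Fin.last n) := by
    have hpow : ‖v‖ ^ p = ‖v‖ ^ (p - 2) * ‖v‖ ^ 2 := by
      rw [← Real.rpow_natCast, ← Real.rpow_add' (norm_nonneg v) (by push_cast; linarith)]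
      norm_num
    rw [hpow, ← norm_dropLast_sq_add_sq, stressVector, EuclideanSpace.inner_single_left]
    simp only [map_one, one_mul, PiLp.smul_apply, smul_eq_mul]
    field_simp
    ring
  have hpartial (i : Fin m) (y : EuclideanSpace ℝ (Fin (n + 1))) :
      fderiv ℝ (u i) y (EuclideanSpace.single (Fin.last n) 1) = gradient (u i) y (Fin.last n) := by
    rw [← inner_gradient_left, EuclideanSpace.inner_single_right, one_mul, conj_trivial]
  simp only [pIntegrand, lagrangianDensity, stressField, gradient_comp_emb (hu _ _), hpartial,
    hterm, Finset.sum_sub_distrib, WithLp.ofLp_sum, Finset.sum_apply]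
  ring

theorem hasDerivAt_pIntegrand (hp : 1 < p) {Ht : (Fin m → ℝ) → ℝ} (hHt : Differentiable ℝ Ht)
    (hu : ∀ i, ContDiff ℝ 2 (u i)) {x : EuclideanSpace ℝ (Fin n)} {t : ℝ}
    (hsol : ∀ i, -vdiv (fun y => ‖gradient (u i) y‖ ^ (p - 2) • gradient (u i) y) (emb x t)
      = fderiv ℝ Ht (fun j => u j (emb x t)) (Pi.single i 1)) :
    HasDerivAt (pIntegrand p Ht u x)
      (vdiv (fun y => dropLast n
        (stressField p (EuclideanSpace.single (Fin.last n) 1) u (emb y t))) x) t := by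
  have hT := (contDiff_stressField hp (EuclideanSpace.single (Fin.last n) 1) hu).differentiable
    one_ne_zero (emb x t)
  have hL := differentiable_lagrangianDensity hp hHt hu (emb x t)
  have hlast := (EuclideanSpace.proj (Fin.last n) :
    EuclideanSpace ℝ (Fin (n + 1)) →L[ℝ] ℝ).hasFDerivAt.comp _ hT.hasFDerivAt
  have hderiv := (hL.hasFDerivAt.sub hlast).comp_hasDerivAt t (hasDerivAt_emb_right x t)
  rw [vdiv_dropLast_comp_emb hT, vdiv_stressField hp hHt hu hsol]
  exact hderiv.congr_of_eventuallyEq (.of_forall fun s =>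
    pIntegrand_eq_lagrangianDensity_sub hp Ht (fun i => (hu i).differentiable two_ne_zero) x s)

theorem inner_dropLast_stressField (hu : ∀ i, Differentiable ℝ (u i))
    (x z : EuclideanSpace ℝ (Fin n)) (t : ℝ) :
    ⟪dropLast n (stressField p (EuclideanSpace.single (Fin.last n) 1) u (emb x t)), z⟫
      = ∑ i, ‖gradient (u i) (emb x t)‖ ^ (p - 2) * ⟪gradient (fun y => u i (emb y t)) x, z⟫
        * fderiv ℝ (u i) (emb x t) (EuclideanSpace.single (Fin.last n) 1) := by
  simp only [stressField, map_sum, sum_inner, stressVector, map_smul, inner_smul_left,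
    gradient_comp_emb (hu _ _), ← inner_gradient_left, conj_trivial]
  refine Finset.sum_congr rfl fun i _ => ?_
  rw [real_inner_comm (gradient (u i) _)]
  ring

end Hamiltonian

theorem hamiltonian_identity_pLaplacian_general
    (n m : ℕ) (p : ℝ) (hp : 1 < p)
    (H : Fin m → (Fin m → ℝ) → ℝ)
    (Ht : (Fin m → ℝ) → ℝ) (hHt : Differentiable ℝ Ht)
    (hHtgrad : ∀ i y, fderiv ℝ Ht y (Pi.single i 1) = H i y)
    (u : Fin m → EuclideanSpace ℝ (Fin (n + 1)) → ℝ)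
    (hu : ∀ i, ContDiff ℝ 2 (u i))
    (hsol : ∀ i x, -vdiv (fun y =>
        ‖gradient (u i) y‖ ^ (p - 2) • gradient (u i) y) x
        = H i (fun j => u j x))
    (hint : ∀ t : ℝ, Integrable (fun x' : EuclideanSpace ℝ (Fin n) => pIntegrand p Ht u x' t))
    (hbdry : ∀ t : ℝ, ∃ R : ℕ → ℝ, Tendsto R atTop atTop ∧
      Tendsto (fun k => ∫ s in (0 : ℝ)..t,
          ∫ x' in sphere (0 : EuclideanSpace ℝ (Fin n)) (R k),
            ∑ i, ‖gradient (u i) (emb x' s)‖ ^ (p - 2)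
              * ⟪gradient (fun y => u i (emb y s)) x', ‖x'‖⁻¹ • x'⟫
              * fderiv ℝ (u i) (emb x' s) (EuclideanSpace.single (Fin.last n) 1)
            ∂μH[(n : ℝ) - 1]) atTop (nhds 0)) (t : ℝ) :
    ∫ x' : EuclideanSpace ℝ (Fin n), pIntegrand p Ht u x' t
      = ∫ x' : EuclideanSpace ℝ (Fin n), pIntegrand p Ht u x' 0 := by
  obtain ⟨R, hR, hflux⟩ := hbdry t
  let T := stressField p (EuclideanSpace.single (Fin.last n) 1) u
  have hT : ContDiff ℝ 1 T := contDiff_stressField hp _ hu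
  simp only [← inner_dropLast_stressField fun i => (hu i).differentiable two_ne_zero] at hflux
  refine integral_eq_of_hasDerivAt_vdiv (V := fun s x => dropLast n (T (emb x s))) hR
    (hint 0) (hint t) (fun x s => ?_) (fun s => ?_) ?_ hflux
  · exact hasDerivAt_pIntegrand hp hHt hu fun i => (hsol i _).trans (hHtgrad i _).symm
  · exact (dropLast n).contDiff.comp (hT.comp (contDiff_emb.comp (contDiff_prodMk_right s)))
  · exact continuous_vdiv_dropLast_comp_emb hT

/-- **Hamiltonian identity for the p-Laplacian system**
`-div(|∇uᵢ|^{p-2}∇uᵢ) = Hᵢ(u)` on `ℝ^{n+1}`: under the stated integrability,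
differentiation-under-the-integral and vanishing-boundary-term assumptions,
`∫_{ℝⁿ} ( ∑ᵢ |∇uᵢ|^{p-2}[ (1/p)|∇_{x'}uᵢ|² - ((p-1)/p)|∂_{x_n}uᵢ|² ] - H̃(u) ) dx'`
is independent of `x_n`. -/
theorem hamiltonian_identity_pLaplacian
    (n m : ℕ) (hm : 1 ≤ m) (p : ℝ) (hp : 1 < p)
    (H : Fin m → (Fin m → ℝ) → ℝ) (hH : ∀ i, ContDiff ℝ 1 (H i))
    (Ht : (Fin m → ℝ) → ℝ) (hHt : ContDiff ℝ 2 Ht)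
    (hHtgrad : ∀ i y, fderiv ℝ Ht y (Pi.single i 1) = H i y)
    (u : Fin m → EuclideanSpace ℝ (Fin (n + 1)) → ℝ)
    (hu : ∀ i, ContDiff ℝ 2 (u i))
    (hsol : ∀ i x, -vdiv (fun y =>
        ‖gradient (u i) y‖ ^ (p - 2) • gradient (u i) y) x
        = H i (fun j => u j x))
    -- (i) integrability of the integrand on every horizontal slice
    (hint : ∀ t : ℝ, Integrable (fun x' : EuclideanSpace ℝ (Fin n) => pIntegrand p Ht u x' t))
    -- (ii) differentiation under the integral sign is justified on every ball
    (hdiff : ∀ R : ℝ, 0 < R → ∀ t : ℝ,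
      HasDerivAt (fun s : ℝ => ∫ x' in ball (0 : EuclideanSpace ℝ (Fin n)) R,
          pIntegrand p Ht u x' s)
        (∫ x' in ball (0 : EuclideanSpace ℝ (Fin n)) R,
          deriv (fun s : ℝ => pIntegrand p Ht u x' s) t) t)
    -- (iii) the boundary terms vanish along a sequence of radii tending to infinity
    (hbdry : ∀ t : ℝ, ∃ R : ℕ → ℝ, Tendsto R atTop atTop ∧
      Tendsto (fun k => ∫ s in (0 : ℝ)..t,
          ∫ x' in sphere (0 : EuclideanSpace ℝ (Fin n)) (R k),
            ∑ i, ‖gradient (u i) (emb x' s)‖ ^ (p - 2)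
              * ⟪gradient (fun y => u i (emb y s)) x', ‖x'‖⁻¹ • x'⟫
              * fderiv ℝ (u i) (emb x' s) (EuclideanSpace.single (Fin.last n) 1)
            ∂μH[(n : ℝ) - 1]) atTop (nhds 0)) :
    ∀ t : ℝ, (∫ x' : EuclideanSpace ℝ (Fin n), pIntegrand p Ht u x' t)
      = ∫ x' : EuclideanSpace ℝ (Fin n), pIntegrand p Ht u x' 0 :=
  hamiltonian_identity_pLaplacian_general n m p hp H Ht (hHt.differentiable two_ne_zero) hHtgrad
    u hu hsol hint hbdry
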